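/- Consider the elastic von Karman beam system on [L₀,L]×[0,T+h] and its time-difference (u_d, v_d) with step h, and let M > 0. Assume the overdetermined boundary conditions u_d(L₀,t) = u_dx(L₀,t) = u_dxx(L₀,t) = u_dxxx(L₀,t) = v_d(L₀,t) = v_dx(L₀,t) = 0 and u_d(L,t) = u_dxx(L,t) = v_d(L,t) = 0 for all t ∈ [0,T], and assume T > 10(L − L₀)(μ₂/λ₂ + ρ₂)^{1/2}. Then there exists a constant C > 0, depending only on β₂, μ₂, λ₂, ρ₂, L₀, L, T, h, M, such that for every M-bounded solution (u,v) the observability inequality holds: E_d(T) + E_d(0) ≤ C ∫₀^T ∫_{L₀}^{L} ( u_dt² + u_dx² + u_d² + v_d² ) dx dt. -/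

import Mathlib

open MeasureTheory

noncomputable section

/-- Partial derivative in the first (space) variable. -/
def pdx (f : ℝ → ℝ → ℝ) : ℝ → ℝ → ℝ := fun x t => deriv (fun y => f y t) x

/-- Partial derivative in the second (time) variable. -/
def pdt (f : ℝ → ℝ → ℝ) : ℝ → ℝ → ℝ := fun x t => deriv (fun s => f x s) t

/-- Time difference with step `h`. -/
def tdiff (h : ℝ) (f : ℝ → ℝ → ℝ) : ℝ → ℝ → ℝ := fun x t => f x (t + h) - f x t

/-- The elastic full von Karman beam system on `[L₀,L] × [0,Th]`. -/
def VKBeam (β₂ μ₂ lam₂ ρ₂ L₀ L Th : ℝ) (u v : ℝ → ℝ → ℝ) : Prop :=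
  ∀ x ∈ Set.Icc L₀ L, ∀ t ∈ Set.Icc (0:ℝ) Th,
    β₂ * pdt (pdt u) x t - μ₂ * pdx (pdx (pdt (pdt u))) x t
        + lam₂ * pdx (pdx (pdx (pdx u))) x t
        - pdx (fun y s => pdx u y s * (pdx v y s + (pdx u y s) ^ 2 / 2)) x t = 0 ∧
    ρ₂ * pdt (pdt v) x t - pdx (fun y s => pdx v y s + (pdx u y s) ^ 2 / 2) x t = 0

/-- `f` has all partial derivatives of order at most 4 bounded by `M` on
`[L₀,L] × [0,Th]`. -/
def MBounded (M L₀ L Th : ℝ) (f : ℝ → ℝ → ℝ) : Prop :=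
  ∀ k : ℕ, k ≤ 4 → ∀ x ∈ Set.Icc L₀ L, ∀ t ∈ Set.Icc (0:ℝ) Th,
    ‖iteratedFDeriv ℝ k (Function.uncurry f) (x, t)‖ ≤ M

/-- Energy of the time difference `(u_d, v_d)`. -/
def Ed (β₂ μ₂ lam₂ ρ₂ L₀ L h : ℝ) (u v : ℝ → ℝ → ℝ) (t : ℝ) : ℝ :=
  (1 / 2) * (β₂ * (∫ x in L₀..L, (pdt (tdiff h u) x t) ^ 2)
    + μ₂ * (∫ x in L₀..L, (pdx (pdt (tdiff h u)) x t) ^ 2)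
    + lam₂ * (∫ x in L₀..L, (pdx (pdx (tdiff h u)) x t) ^ 2)
    + (∫ x in L₀..L, (pdx (tdiff h v) x t
        + (1 / 2) * pdx (tdiff h u) x t * (pdx u x (t + h) + pdx u x t)) ^ 2)
    + ρ₂ * (∫ x in L₀..L, (pdt (tdiff h v) x t) ^ 2))

end

open scoped ContDiff Topology

/-- smooth functions of two variables -/
class Sm (f : ℝ → ℝ → ℝ) : Prop where
  sm : ContDiff ℝ ∞ (Function.uncurry f)

def cst (c : ℝ) : ℝ → ℝ → ℝ := fun _ _ => c
def mX (L : ℝ) : ℝ → ℝ → ℝ := fun x _ => x - L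
def shf (h : ℝ) (f : ℝ → ℝ → ℝ) : ℝ → ℝ → ℝ := fun x t => f x (t + h)

section infra
variable {f g : ℝ → ℝ → ℝ}

instance Sm.add [hf : Sm f] [hg : Sm g] : Sm (f + g) := ⟨hf.sm.add hg.sm⟩
instance Sm.sub [hf : Sm f] [hg : Sm g] : Sm (f - g) := ⟨hf.sm.sub hg.sm⟩
instance Sm.mul [hf : Sm f] [hg : Sm g] : Sm (f * g) := ⟨hf.sm.mul hg.sm⟩
instance Sm.cst (c : ℝ) : Sm (cst c) := ⟨contDiff_const⟩
instance Sm.mX (c : ℝ) : Sm (mX c) := ⟨contDiff_fst.sub contDiff_const⟩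
instance Sm.shf (h : ℝ) [hf : Sm f] : Sm (shf h f) :=
  ⟨hf.sm.comp (contDiff_fst.prodMk (contDiff_snd.add contDiff_const))⟩

theorem Sm.diff [hf : Sm f] (p : ℝ × ℝ) : DifferentiableAt ℝ (Function.uncurry f) p :=
  (hf.sm.differentiable (by simp)) p

theorem Sm.hx' [hf : Sm f] (x t : ℝ) :
    HasDerivAt (fun y => f y t) (fderiv ℝ (Function.uncurry f) (x, t) (1, 0)) x := by
  have h1 : HasDerivAt (fun y : ℝ => (y, t)) ((1:ℝ), (0:ℝ)) x :=
    (hasDerivAt_id x).prodMk (hasDerivAt_const x t)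
  exact (Sm.diff (f := f) (x, t)).hasFDerivAt.comp_hasDerivAt x h1

theorem Sm.ht' [hf : Sm f] (x t : ℝ) :
    HasDerivAt (fun s => f x s) (fderiv ℝ (Function.uncurry f) (x, t) (0, 1)) t := by
  have h1 : HasDerivAt (fun s : ℝ => (x, s)) ((0:ℝ), (1:ℝ)) t :=
    (hasDerivAt_const t x).prodMk (hasDerivAt_id t)
  exact (Sm.diff (f := f) (x, t)).hasFDerivAt.comp_hasDerivAt t h1

theorem pdx_eq [hf : Sm f] (x t : ℝ) :
    pdx f x t = fderiv ℝ (Function.uncurry f) (x, t) (1, 0) := (Sm.hx' x t).deriv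
theorem pdt_eq [hf : Sm f] (x t : ℝ) :
    pdt f x t = fderiv ℝ (Function.uncurry f) (x, t) (0, 1) := (Sm.ht' x t).deriv

theorem Sm.hx [hf : Sm f] (x t : ℝ) : HasDerivAt (fun y => f y t) (pdx f x t) x := by
  rw [pdx_eq]; exact Sm.hx' x t
theorem Sm.ht [hf : Sm f] (x t : ℝ) : HasDerivAt (fun s => f x s) (pdt f x t) t := by
  rw [pdt_eq]; exact Sm.ht' x t

theorem pdx_eq2 [hf : Sm f] :
    Function.uncurry (pdx f) = fun p => fderiv ℝ (Function.uncurry f) p (1, 0) := by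
  funext ⟨x, t⟩; exact pdx_eq x t
theorem pdt_eq2 [hf : Sm f] :
    Function.uncurry (pdt f) = fun p => fderiv ℝ (Function.uncurry f) p (0, 1) := by
  funext ⟨x, t⟩; exact pdt_eq x t

theorem Sm.fd [hf : Sm f] : ContDiff ℝ ∞ (fderiv ℝ (Function.uncurry f)) :=
  hf.sm.fderiv_right (by simp)

instance Sm.pdx [hf : Sm f] : Sm (pdx f) := ⟨by
  rw [pdx_eq2]; exact (Sm.fd (f := f)).clm_apply contDiff_const⟩
instance Sm.pdt [hf : Sm f] : Sm (pdt f) := ⟨by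
  rw [pdt_eq2]; exact (Sm.fd (f := f)).clm_apply contDiff_const⟩

theorem fd2 [hf : Sm f] (p v w : ℝ × ℝ) :
    fderiv ℝ (fun p => fderiv ℝ (Function.uncurry f) p v) p w
      = fderiv ℝ (fderiv ℝ (Function.uncurry f)) p w v := by
  have h := ((Sm.fd (f := f)).differentiable (by simp) p).hasFDerivAt
  have := (h.clm_apply (hasFDerivAt_const v p)).fderiv
  rw [this]; simp

theorem pd_comm [hf : Sm f] : pdt (pdx f) = pdx (pdt f) := by
  funext x t
  rw [pdt_eq, pdx_eq, pdx_eq2, pdt_eq2, fd2, fd2]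
  have : IsSymmSndFDerivAt ℝ (Function.uncurry f) (x, t) :=
    hf.sm.contDiffAt.isSymmSndFDerivAt (by
      simp only [minSmoothness_of_isRCLikeNormedField]
      exact (show ((2:ℕ∞) : WithTop ℕ∞) ≤ ((⊤:ℕ∞) : WithTop ℕ∞) from WithTop.coe_le_coe.2 le_top))
  exact this _ _

theorem pdx_add [Sm f] [Sm g] : pdx (f + g) = pdx f + pdx g := by
  funext x t; exact ((Sm.hx (f := f) x t).add (Sm.hx (f := g) x t)).deriv
theorem pdx_sub [Sm f] [Sm g] : pdx (f - g) = pdx f - pdx g := by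
  funext x t; exact ((Sm.hx (f := f) x t).sub (Sm.hx (f := g) x t)).deriv
theorem pdx_mul [Sm f] [Sm g] : pdx (f * g) = pdx f * g + f * pdx g := by
  funext x t; exact ((Sm.hx (f := f) x t).mul (Sm.hx (f := g) x t)).deriv
theorem pdt_add [Sm f] [Sm g] : pdt (f + g) = pdt f + pdt g := by
  funext x t; exact ((Sm.ht (f := f) x t).add (Sm.ht (f := g) x t)).deriv
theorem pdt_sub [Sm f] [Sm g] : pdt (f - g) = pdt f - pdt g := by
  funext x t; exact ((Sm.ht (f := f) x t).sub (Sm.ht (f := g) x t)).deriv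
theorem pdt_mul [Sm f] [Sm g] : pdt (f * g) = pdt f * g + f * pdt g := by
  funext x t; exact ((Sm.ht (f := f) x t).mul (Sm.ht (f := g) x t)).deriv
theorem pdx_cst (c : ℝ) : pdx (cst c) = cst 0 := by
  funext x t; simp [pdx, cst]
theorem pdt_cst (c : ℝ) : pdt (cst c) = cst 0 := by
  funext x t; simp [pdt, cst]
theorem pdx_mX (c : ℝ) : pdx (mX c) = cst 1 := by
  funext x t; simp [pdx, cst, mX]
theorem pdt_mX (c : ℝ) : pdt (mX c) = cst 0 := by
  funext x t; simp [pdt, cst, mX]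
theorem pdx_shf (h : ℝ) : pdx (shf h f) = shf h (pdx f) := rfl
theorem pdt_shf (h : ℝ) : pdt (shf h f) = shf h (pdt f) := by
  funext x t; exact deriv_comp_add_const (f x) h t
theorem tdiff_eq (h : ℝ) : tdiff h f = shf h f - f := rfl

theorem Sm.cont [hf : Sm f] : Continuous (Function.uncurry f) := hf.sm.continuous
theorem Sm.contx [hf : Sm f] (t : ℝ) : Continuous (fun x => f x t) :=
  (Sm.cont (f := f)).comp (by fun_prop : Continuous fun x : ℝ => (x, t))
theorem Sm.contt [hf : Sm f] (x : ℝ) : Continuous (fun t => f x t) :=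
  (Sm.cont (f := f)).comp (by fun_prop : Continuous fun t : ℝ => (x, t))

theorem int_pdx [Sm f] (a b t : ℝ) : ∫ x in a..b, pdx f x t = f b t - f a t :=
  intervalIntegral.integral_eq_sub_of_hasDerivAt (fun x _ => Sm.hx (f := f) x t)
    ((Sm.contx (f := pdx f) t).intervalIntegrable a b)

theorem Sm.contInt [hf : Sm f] (a b : ℝ) : Continuous (fun t => ∫ x in a..b, f x t) := by
  apply intervalIntegral.continuous_parametric_intervalIntegral_of_continuous'
  exact (Sm.cont (f := f)).comp continuous_swap

theorem hasDeriv_int [hf : Sm f] (a b t : ℝ) :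
    HasDerivAt (fun s => ∫ x in a..b, f x s) (∫ x in a..b, pdt f x t) t := by
  obtain ⟨B, hB⟩ := (isCompact_uIcc.prod (isCompact_closedBall t 1)).exists_bound_of_continuousOn
    (s := Set.uIcc a b ×ˢ Metric.closedBall t 1)
    (f := Function.uncurry (pdt f)) (Sm.cont (f := pdt f)).continuousOn
  refine (intervalIntegral.hasDerivAt_integral_of_dominated_loc_of_deriv_le (μ := volume)
    (F := fun s x => f x s) (F' := fun s x => pdt f x s) (bound := fun _ => B)
    (Metric.closedBall_mem_nhds t one_pos) ?_ ?_ ?_ ?_ ?_ ?_).2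
  · exact Filter.Eventually.of_forall fun s => (Sm.contx (f := f) s).aestronglyMeasurable
  · exact (Sm.contx (f := f) t).intervalIntegrable a b
  · exact (Sm.contx (f := pdt f) t).aestronglyMeasurable
  · refine Filter.Eventually.of_forall fun x hx s hs => ?_
    exact hB (x, s) ⟨Set.uIoc_subset_uIcc hx, hs⟩
  · simp
  · exact Filter.Eventually.of_forall fun x _ s _ => Sm.ht (f := f) x s

theorem pdt_zero [Sm f] {T : ℝ} (hT : 0 < T) {x : ℝ} (h : ∀ t ∈ Set.Icc 0 T, f x t = 0) :
    ∀ t ∈ Set.Icc 0 T, pdt f x t = 0 := by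
  intro t ht
  have h1 := (Sm.ht (f := f) x t).hasDerivWithinAt (s := Set.Icc 0 T)
  have h2 : HasDerivWithinAt (fun s => f x s) 0 (Set.Icc 0 T) t :=
    (hasDerivWithinAt_const t _ (0:ℝ)).congr (fun s hs => h s hs) (h t ht)
  exact (uniqueDiffOn_Icc hT t ht).eq_deriv _ h1 h2

theorem bd1 [Sm f] {M L₀ L Th : ℝ} (h : MBounded M L₀ L Th f) {x t : ℝ}
    (hx : x ∈ Set.Icc L₀ L) (ht : t ∈ Set.Icc 0 Th) : |pdx f x t| ≤ M := by
  have := h 1 (by norm_num) x hx t ht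
  rw [norm_iteratedFDeriv_one] at this
  rw [pdx_eq, ← Real.norm_eq_abs]
  refine ((fderiv ℝ (Function.uncurry f) (x, t)).le_opNorm _).trans ?_
  simpa [Prod.norm_def] using this

theorem bd2 [Sm f] {M L₀ L Th : ℝ} (h : MBounded M L₀ L Th f) {x t : ℝ}
    (hx : x ∈ Set.Icc L₀ L) (ht : t ∈ Set.Icc 0 Th) :
    |pdx (pdx f) x t| ≤ M ∧ |pdt (pdx f) x t| ≤ M := by
  have h2 := h 2 (by norm_num) x hx t ht
  have key : ∀ v : Fin 2 → ℝ × ℝ, (∀ i, ‖v i‖ ≤ 1) →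
      |fderiv ℝ (fderiv ℝ (Function.uncurry f)) (x, t) (v 0) (v 1)| ≤ M := by
    intro v hv
    rw [← iteratedFDeriv_two_apply, ← Real.norm_eq_abs]
    refine (ContinuousMultilinearMap.le_opNorm _ _).trans ?_
    have h0 := hv 0
    have h1 := hv 1
    have h3 : ‖v 0‖ * ‖v 1‖ ≤ 1 := mul_le_one₀ h0 (norm_nonneg _) h1
    rw [Fin.prod_univ_two]
    calc _ ≤ _ * 1 := mul_le_mul_of_nonneg_left h3 (norm_nonneg _)
      _ ≤ M := by simpa using h2
  constructor
  · rw [pdx_eq, pdx_eq2, fd2]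
    exact key ![(1, 0), (1, 0)] (by intro i; fin_cases i <;> simp [Prod.norm_def])
  · rw [pdt_eq, pdx_eq2, fd2]
    exact key ![(0, 1), (1, 0)] (by intro i; fin_cases i <;> simp [Prod.norm_def])

end infra

theorem trace_ineq {T : ℝ} (hT : 0 < T) {f f' g : ℝ → ℝ}
    (hf : ∀ t, HasDerivAt f (f' t) t) (hf' : Continuous f') (hg : Continuous g)
    (h : ∀ t ∈ Set.Icc 0 T, |f' t| ≤ g t) :
    T * (f 0 + f T) ≤ 2 * (∫ t in (0:ℝ)..T, f t) + 2 * T * ∫ t in (0:ℝ)..T, g t := by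
  have hfc : Continuous f := continuous_iff_continuousAt.2 fun t => (hf t).continuousAt
  have hg0 : ∀ t ∈ Set.Icc 0 T, 0 ≤ g t := fun t ht => (abs_nonneg _).trans (h t ht)
  have key : ∀ t ∈ Set.Icc 0 T, f 0 + f T ≤ 2 * f t + ∫ s in (0:ℝ)..T, g s := by
    intro t ht
    have e1 : ∫ s in (0:ℝ)..t, f' s = f t - f 0 :=
      intervalIntegral.integral_eq_sub_of_hasDerivAt (fun s _ => hf s)
        (hf'.intervalIntegrable _ _)
    have e2 : ∫ s in t..T, f' s = f T - f t :=
      intervalIntegral.integral_eq_sub_of_hasDerivAt (fun s _ => hf s)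
        (hf'.intervalIntegrable _ _)
    have b1 : -∫ s in (0:ℝ)..t, g s ≤ ∫ s in (0:ℝ)..t, f' s := by
      rw [← intervalIntegral.integral_neg]
      refine intervalIntegral.integral_mono_on ht.1 (hg.neg.intervalIntegrable _ _)
        (hf'.intervalIntegrable _ _) fun s hs => ?_
      exact (abs_le.1 (h s ⟨hs.1, hs.2.trans ht.2⟩)).1
    have b2 : ∫ s in t..T, f' s ≤ ∫ s in t..T, g s := by
      refine intervalIntegral.integral_mono_on ht.2 (hf'.intervalIntegrable _ _)
        (hg.intervalIntegrable _ _) fun s hs => ?_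
      exact (abs_le.1 (h s ⟨ht.1.trans hs.1, hs.2⟩)).2
    have e3 := intervalIntegral.integral_add_adjacent_intervals
      (hg.intervalIntegrable (μ := volume) 0 t) (hg.intervalIntegrable (μ := volume) t T)
    linarith
  have hG : 0 ≤ ∫ s in (0:ℝ)..T, g s := intervalIntegral.integral_nonneg hT.le hg0
  have := intervalIntegral.integral_mono_on (μ := volume) hT.le
    (continuous_const.intervalIntegrable (0:ℝ) T)
    ((by fun_prop : Continuous fun t => 2 * f t + ∫ s in (0:ℝ)..T, g s).intervalIntegrable 0 T) key
  rw [intervalIntegral.integral_const, intervalIntegral.integral_add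
    ((by fun_prop : Continuous fun t => 2 * f t).intervalIntegrable 0 T)
    (continuous_const.intervalIntegrable (0:ℝ) T), intervalIntegral.integral_const_mul,
    intervalIntegral.integral_const] at this
  simp only [smul_eq_mul, sub_zero] at this
  nlinarith [mul_nonneg hT.le hG]

theorem ode_lemma {T K C₁ C₂ ε : ℝ} (hT : 0 < T) (hK : 0 ≤ K) (hTK : 10 * K < T)
    (hC₁ : 0 ≤ C₁) (hC₂ : 0 < C₂) (hε : ε = 1 / (8 * (1 + 2 * C₁ + T)))
    {E S P R e e' d : ℝ → ℝ}
    (hE : ∀ t, HasDerivAt E (S t) t) (hP : ∀ t, HasDerivAt P (R t) t)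
    (he : ∀ t, HasDerivAt e (e' t) t)
    (hS : Continuous S) (hR : Continuous R) (he' : Continuous e') (hd : Continuous d)
    (E0 : ∀ t ∈ Set.Icc 0 T, 0 ≤ E t) (d0 : ∀ t ∈ Set.Icc 0 T, 0 ≤ d t)
    (ed : ∀ t ∈ Set.Icc 0 T, e t ≤ d t)
    (bS : ∀ t ∈ Set.Icc 0 T, |S t| ≤ ε * E t + C₂ * d t)
    (bR : ∀ t ∈ Set.Icc 0 T, R t + E t ≤ ε * E t + C₂ * d t)
    (be : ∀ t ∈ Set.Icc 0 T, |e' t| ≤ ε * E t + C₂ * d t)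
    (bP : ∀ t ∈ Set.Icc 0 T, |P t| ≤ 2 * K * E t + C₁ * e t) :
    E T + E 0 ≤ ((9 / 4 * (2 * (C₁ * (2 / T + 2 * C₂) + C₂)) + 2 * T * C₂) / (T - 9 * K))
      * ∫ t in (0:ℝ)..T, d t := by
  have hEc : Continuous E := continuous_iff_continuousAt.2 fun t => (hE t).continuousAt
  have hec : Continuous e := continuous_iff_continuousAt.2 fun t => (he t).continuousAt
  set I := ∫ t in (0:ℝ)..T, E t with hI
  set J := ∫ t in (0:ℝ)..T, d t with hJ
  have I0 : 0 ≤ I := intervalIntegral.integral_nonneg hT.le E0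
  have J0 : 0 ≤ J := intervalIntegral.integral_nonneg hT.le d0
  have hgc : Continuous fun t => ε * E t + C₂ * d t := by fun_prop
  have hgi : ∫ t in (0:ℝ)..T, (ε * E t + C₂ * d t) = ε * I + C₂ * J := by
    rw [intervalIntegral.integral_add
      ((by fun_prop : Continuous fun t => ε * E t).intervalIntegrable 0 T)
      ((by fun_prop : Continuous fun t => C₂ * d t).intervalIntegrable 0 T),
      intervalIntegral.integral_const_mul, intervalIntegral.integral_const_mul]
  have h2 := trace_ineq hT hE hS hgc bS
  have h3 := trace_ineq hT he he' hgc be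
  rw [hgi] at h2 h3
  have h4 : ∫ t in (0:ℝ)..T, e t ≤ J := intervalIntegral.integral_mono_on hT.le
    (hec.intervalIntegrable _ _) (hd.intervalIntegrable _ _) ed
  have h1 : P T - P 0 + I ≤ ε * I + C₂ * J := by
    rw [← hgi, ← intervalIntegral.integral_eq_sub_of_hasDerivAt (fun s _ => hP s)
        (hR.intervalIntegrable _ _), hI, ← intervalIntegral.integral_add
        (hR.intervalIntegrable _ _) (hEc.intervalIntegrable _ _)]
    exact intervalIntegral.integral_mono_on hT.le ((hR.add hEc).intervalIntegrable _ _)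
      (hgc.intervalIntegrable _ _) bR
  have p0 := (abs_le.1 (bP 0 ⟨le_rfl, hT.le⟩)).2
  have pT := (abs_le.1 (bP T ⟨hT.le, le_rfl⟩)).1
  have hY : 0 ≤ E 0 + E T := add_nonneg (E0 0 ⟨le_rfl, hT.le⟩) (E0 T ⟨hT.le, le_rfl⟩)
  set Y := E 0 + E T with hYd
  set y := e 0 + e T with hyd
  have hε0 : 0 < ε := by rw [hε]; positivity
  have hε1 : ε * (1 + 2 * C₁ + T) = 1 / 8 := by rw [hε]; field_simp
  have h1' : I ≤ 2 * K * Y + C₁ * y + ε * I + C₂ * J := by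
    rw [hYd, hyd]; linarith
  have h3' : y ≤ (2 / T + 2 * C₂) * J + 2 * ε * I := by
    have : y ≤ (2 * J + 2 * T * (ε * I + C₂ * J)) / T := by
      rw [le_div_iff₀ hT]; linarith
    refine this.trans (le_of_eq ?_)
    field_simp
    ring
  have h3'' := mul_le_mul_of_nonneg_left h3' hC₁
  have s1 : ε * (1 + 2 * C₁) * I ≤ 1 / 8 * I :=
    mul_le_mul_of_nonneg_right (by nlinarith) I0
  have s2 : T * ε * I ≤ 1 / 8 * I :=
    mul_le_mul_of_nonneg_right (by nlinarith [mul_nonneg hε0.le hC₁]) I0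
  have hA : I ≤ 4 * K * Y + (2 * (C₁ * (2 / T + 2 * C₂) + C₂)) * J := by
    nlinarith [mul_nonneg hK hY]
  have hB : (T - 9 * K) * Y ≤ (9 / 4 * (2 * (C₁ * (2 / T + 2 * C₂) + C₂)) + 2 * T * C₂) * J := by
    nlinarith
  have hpos : 0 < T - 9 * K := by linarith
  rw [div_mul_eq_mul_div, le_div_iff₀ hpos]
  linarith [hB]

theorem young {c x y k : ℝ} (hc : 0 < c) (_hk : 0 ≤ k) :
    k * |x * y| ≤ c * x ^ 2 + k ^ 2 / (4 * c) * y ^ 2 := by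
  have h : c * x ^ 2 + k ^ 2 / (4 * c) * y ^ 2 - k * (|x| * |y|)
      = (2 * c * |x| - k * |y|) ^ 2 / (4 * c) := by
    rw [← sq_abs x, ← sq_abs y]; field_simp; ring
  rw [abs_mul]
  have : 0 ≤ (2 * c * |x| - k * |y|) ^ 2 / (4 * c) := by positivity
  linarith

theorem abs_mul_le' {m x B : ℝ} (hm : |m| ≤ B) : |m * x| ≤ B * |x| := by
  rw [abs_mul]; exact mul_le_mul_of_nonneg_right hm (abs_nonneg _)

/-- absorbing lower order terms -/
theorem absorb {β μ lam ρ B l ε : ℝ} (hβ : 0 < β) (hμ : 0 < μ) (hlam : 0 < lam) (hρ : 0 < ρ)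
    (hB : 0 < B) (hl : 0 < l) (hε : 0 < ε) :
    ∃ C₂ > 0, ∀ wt wx w z wtx wxx th zt a ax at' b m : ℝ,
      |a| ≤ B → |ax| ≤ B → |at'| ≤ B → |b| ≤ B → |m| ≤ l →
      |-b * wx * wtx + at' * th * wx| ≤ ε * (1 / 2 * (β * wt ^ 2 + μ * wtx ^ 2 + lam * wxx ^ 2
        + th ^ 2 + ρ * zt ^ 2)) + C₂ * (wt ^ 2 + wx ^ 2 + w ^ 2 + z ^ 2) ∧
      -β * wt ^ 2 - b * m * wx * wxx + th * wx * (a + m * ax) ≤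
        ε * (1 / 2 * (β * wt ^ 2 + μ * wtx ^ 2 + lam * wxx ^ 2
        + th ^ 2 + ρ * zt ^ 2)) + C₂ * (wt ^ 2 + wx ^ 2 + w ^ 2 + z ^ 2) ∧
      |2 * (wx * wtx) + 2 * (w * wt)| ≤ ε * (1 / 2 * (β * wt ^ 2 + μ * wtx ^ 2 + lam * wxx ^ 2
        + th ^ 2 + ρ * zt ^ 2)) + C₂ * (wt ^ 2 + wx ^ 2 + w ^ 2 + z ^ 2) := by
  obtain ⟨D, hD⟩ : ∃ D, D = 2 + B + B * l := ⟨_, rfl⟩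
  have hBl : 0 < B * l := mul_pos hB hl
  have hD0 : 0 < D := by rw [hD]; linarith
  refine ⟨1 + D ^ 2 / (4 * (ε * μ / 2)) + D ^ 2 / (4 * (ε * lam / 2)) + D ^ 2 / (4 * (ε / 2)),
    by positivity, ?_⟩
  intro wt wx w z wtx wxx th zt a ax at' b m ha hax hat hb hm
  have y1 := young (x := wtx) (y := wx) (k := D) (by positivity : 0 < ε * μ / 2) hD0.le
  have y2 := young (x := wxx) (y := wx) (k := D) (by positivity : 0 < ε * lam / 2) hD0.le
  have y3 := young (x := th) (y := wx) (k := D) (by positivity : 0 < ε / 2) hD0.le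
  obtain ⟨c1, hc1⟩ : ∃ c, c = D ^ 2 / (4 * (ε * μ / 2)) := ⟨_, rfl⟩
  obtain ⟨c2, hc2⟩ : ∃ c, c = D ^ 2 / (4 * (ε * lam / 2)) := ⟨_, rfl⟩
  obtain ⟨c3, hc3⟩ : ∃ c, c = D ^ 2 / (4 * (ε / 2)) := ⟨_, rfl⟩
  have p1 : 0 < c1 := by rw [hc1]; positivity
  have p2 : 0 < c2 := by rw [hc2]; positivity
  have p3 : 0 < c3 := by rw [hc3]; positivity
  rw [← hc1] at y1 ⊢
  rw [← hc2] at y2 ⊢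
  rw [← hc3] at y3 ⊢
  obtain ⟨X, hX⟩ : ∃ X, X = D * |wtx * wx| + D * |wxx * wx| + D * |th * wx| + wt ^ 2 + w ^ 2 :=
    ⟨_, rfl⟩
  have main : X ≤ ε * (1 / 2 * (β * wt ^ 2 + μ * wtx ^ 2 + lam * wxx ^ 2
        + th ^ 2 + ρ * zt ^ 2)) + (1 + c1 + c2 + c3) * (wt ^ 2 + wx ^ 2 + w ^ 2 + z ^ 2) := by
    have q1 : 0 ≤ ε * (β * wt ^ 2) := by positivity
    have q2 : 0 ≤ ε * (ρ * zt ^ 2) := by positivity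
    have q3 : 0 ≤ (c1 + c2 + c3) * (wt ^ 2 + w ^ 2 + z ^ 2) := by positivity
    have q4 : 0 ≤ wx ^ 2 + z ^ 2 := by positivity
    rw [hX]; linarith
  have n1 := abs_nonneg (wtx * wx)
  have n2 := abs_nonneg (wxx * wx)
  have n3 := abs_nonneg (th * wx)
  have D1 : B * |wtx * wx| ≤ D * |wtx * wx| := mul_le_mul_of_nonneg_right (by linarith) n1
  have D1' : 2 * |wtx * wx| ≤ D * |wtx * wx| := mul_le_mul_of_nonneg_right (by linarith) n1
  have D2 : B * l * |wxx * wx| ≤ D * |wxx * wx| := mul_le_mul_of_nonneg_right (by linarith) n2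
  have D3 : (B + l * B) * |th * wx| ≤ D * |th * wx| :=
    mul_le_mul_of_nonneg_right (by linarith) n3
  have D3' : B * |th * wx| ≤ D * |th * wx| :=
    mul_le_mul_of_nonneg_right (by linarith) n3
  have N1 : 0 ≤ D * |wtx * wx| := by positivity
  have N2 : 0 ≤ D * |wxx * wx| := by positivity
  have N3 : 0 ≤ D * |th * wx| := by positivity
  have N4 := sq_nonneg wt
  have N5 := sq_nonneg w
  refine ⟨le_trans ?_ main, le_trans ?_ main, le_trans ?_ main⟩
  · have e1 := abs_le.1 (abs_mul_le' (x := wtx * wx) hb)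
    have e2 := abs_le.1 (abs_mul_le' (x := th * wx) hat)
    rw [hX, abs_le]
    constructor <;> linarith
  · have hbm : |b * m| ≤ B * l := by
      rw [abs_mul]; exact mul_le_mul hb hm (abs_nonneg _) hB.le
    have ham : |a + m * ax| ≤ B + l * B := by
      refine (abs_add_le _ _).trans (add_le_add ha ?_)
      rw [abs_mul]; exact mul_le_mul hm hax (abs_nonneg _) hl.le
    have e1 := abs_le.1 (abs_mul_le' (x := wxx * wx) hbm)
    have e2 := abs_le.1 (abs_mul_le' (x := th * wx) ham)
    have : 0 ≤ β * wt ^ 2 := by positivity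
    rw [hX]
    linarith
  · have e1 := abs_le.1 (le_refl |wtx * wx|)
    rw [hX, abs_le]
    constructor <;> linarith [sq_nonneg (w + wt), sq_nonneg (w - wt)]

theorem pbound {β μ lam ρ B l k : ℝ} (hβ : 0 < β) (hμ : 0 < μ) (hlam : 0 < lam) (hρ : 0 < ρ)
    (hB : 0 < B) (hl : 0 < l) (hk : k = Real.sqrt (μ / lam + ρ)) :
    ∃ C₁ > 0, ∀ wt wx w wtx wxx th zt zx a m : ℝ,
      |a| ≤ B → |m| ≤ l → th = zx + a * wx →
      |β * wt * m * wx + μ * wtx * m * wxx + ρ * zt * m * zx - β * wt * w| ≤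
        2 * (l * k) * (1 / 2 * (β * wt ^ 2 + μ * wtx ^ 2 + lam * wxx ^ 2
        + th ^ 2 + ρ * zt ^ 2)) + C₁ * (wx ^ 2 + w ^ 2) := by
  have hk0 : 0 < k := by rw [hk]; positivity
  have hk2 : k ^ 2 = μ / lam + ρ := by rw [hk, Real.sq_sqrt]; positivity
  have hm1 : μ ≤ k ^ 2 * lam := by
    rw [hk2, add_mul, div_mul_cancel₀ _ hlam.ne']; nlinarith [mul_pos hρ hlam]
  have hr1 : ρ ≤ k ^ 2 := by rw [hk2]; linarith [div_pos hμ hlam]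
  obtain ⟨δ, hδ⟩ : ∃ δ, δ = l * k * β / 4 := ⟨_, rfl⟩
  obtain ⟨η, hη⟩ : ∃ η, η = l * k * ρ / 4 := ⟨_, rfl⟩
  have hδ0 : 0 < δ := by rw [hδ]; positivity
  have hη0 : 0 < η := by rw [hη]; positivity
  refine ⟨(β * l) ^ 2 / (4 * δ) + β ^ 2 / (4 * δ) + (ρ * l * B) ^ 2 / (4 * η), by positivity, ?_⟩
  intro wt wx w wtx wxx th zt zx a m ha hm hth
  have y1 := young (x := wt) (y := wx) hδ0 (by positivity : 0 ≤ β * l)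
  have y2 := young (x := wt) (y := w) hδ0 hβ.le
  have y3 := young (x := zt) (y := wx) hη0 (by positivity : 0 ≤ ρ * l * B)
  have y4 := young (x := wtx) (y := wxx) (by positivity : 0 < l * k * μ / 2)
    (by positivity : 0 ≤ μ * l)
  have y5 := young (x := zt) (y := th) (by positivity : 0 < l * k * ρ / 2)
    (by positivity : 0 ≤ ρ * l)
  have z4 : (μ * l) ^ 2 / (4 * (l * k * μ / 2)) ≤ l * k * lam / 2 := by
    rw [div_le_iff₀ (by positivity)]
    have := mul_le_mul_of_nonneg_left hm1 (by positivity : 0 ≤ l ^ 2 * μ)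
    nlinarith
  have z5 : (ρ * l) ^ 2 / (4 * (l * k * ρ / 2)) ≤ l * k / 2 := by
    rw [div_le_iff₀ (by positivity)]
    have := mul_le_mul_of_nonneg_left hr1 (by positivity : 0 ≤ l ^ 2 * ρ)
    nlinarith
  have z4' := mul_le_mul_of_nonneg_right z4 (sq_nonneg wxx)
  have z5' := mul_le_mul_of_nonneg_right z5 (sq_nonneg th)
  obtain ⟨c1, hc1⟩ : ∃ c, c = (β * l) ^ 2 / (4 * δ) := ⟨_, rfl⟩
  obtain ⟨c2, hc2⟩ : ∃ c, c = β ^ 2 / (4 * δ) := ⟨_, rfl⟩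
  obtain ⟨c3, hc3⟩ : ∃ c, c = (ρ * l * B) ^ 2 / (4 * η) := ⟨_, rfl⟩
  have p1 : 0 ≤ c1 := by rw [hc1]; positivity
  have p2 : 0 ≤ c2 := by rw [hc2]; positivity
  have p3 : 0 ≤ c3 := by rw [hc3]; positivity
  rw [← hc1] at y1 ⊢
  rw [← hc2] at y2 ⊢
  rw [← hc3] at y3 ⊢
  have hma : |m * a| ≤ l * B := by
    rw [abs_mul]; exact mul_le_mul hm ha (abs_nonneg _) hl.le
  have e1 := mul_le_mul_of_nonneg_left (abs_mul_le' (x := wt * wx) hm) hβ.le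
  have e2 := mul_le_mul_of_nonneg_left (abs_mul_le' (x := wtx * wxx) hm) hμ.le
  have e3 := mul_le_mul_of_nonneg_left (abs_mul_le' (x := zt * th) hm) hρ.le
  have e4 := mul_le_mul_of_nonneg_left (abs_mul_le' (x := zt * wx) hma) hρ.le
  have tri : |β * wt * m * wx + μ * wtx * m * wxx + ρ * zt * m * zx - β * wt * w| ≤
      β * |m * (wt * wx)| + μ * |m * (wtx * wxx)| + ρ * |m * (zt * th)|
        + ρ * |m * a * (zt * wx)| + β * |wt * w| := by
    have hzx : zx = th - a * wx := by linarith
    have f1 := abs_le.1 (le_refl (|m * (wt * wx)|))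
    have f2 := abs_le.1 (le_refl (|m * (wtx * wxx)|))
    have f3 := abs_le.1 (le_refl (|m * (zt * th)|))
    have f4 := abs_le.1 (le_refl (|m * a * (zt * wx)|))
    have f5 := abs_le.1 (le_refl (|wt * w|))
    rw [hzx, abs_le]
    constructor
    · linarith [mul_le_mul_of_nonneg_left f1.1 hβ.le, mul_le_mul_of_nonneg_left f2.1 hμ.le,
        mul_le_mul_of_nonneg_left f3.1 hρ.le, mul_le_mul_of_nonneg_left f4.2 hρ.le,
        mul_le_mul_of_nonneg_left f5.2 hβ.le]
    · linarith [mul_le_mul_of_nonneg_left f1.2 hβ.le, mul_le_mul_of_nonneg_left f2.2 hμ.le,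
        mul_le_mul_of_nonneg_left f3.2 hρ.le, mul_le_mul_of_nonneg_left f4.1 hρ.le,
        mul_le_mul_of_nonneg_left f5.1 hβ.le]
  have q1 : 0 ≤ l * k * (β * wt ^ 2) := by positivity
  have q2 : 0 ≤ l * k * (μ * wtx ^ 2) := by positivity
  have q3 : 0 ≤ l * k * (lam * wxx ^ 2) := by positivity
  have q4 : 0 ≤ l * k * (th ^ 2) := by positivity
  have q5 : 0 ≤ l * k * (ρ * zt ^ 2) := by positivity
  have q6 : 0 ≤ (c1 + c3) * w ^ 2 + c2 * wx ^ 2 := by positivity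
  rw [hδ] at y1 y2
  rw [hη] at y3
  linarith

noncomputable section core
variable (β μ lam ρ L : ℝ) (w z a b : ℝ → ℝ → ℝ)

abbrev thD : ℝ → ℝ → ℝ := pdx z + a * pdx w
abbrev fD : ℝ → ℝ → ℝ := a * thD w z a + b * pdx w
abbrev eD : ℝ → ℝ → ℝ := cst (1 / 2) * (cst β * (pdt w * pdt w)
  + cst μ * (pdx (pdt w) * pdx (pdt w)) + cst lam * (pdx (pdx w) * pdx (pdx w))
  + thD w z a * thD w z a + cst ρ * (pdt z * pdt z))
abbrev pD : ℝ → ℝ → ℝ := cst β * pdt w * mX L * pdx w + cst μ * pdx (pdt w) * mX L * pdx (pdx w)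
  + cst ρ * pdt z * mX L * pdx z - cst β * pdt w * w
abbrev q1D : ℝ → ℝ → ℝ :=
  cst (1 / 2) * mX L * (cst β * (pdt w * pdt w) + cst μ * (pdx (pdt w) * pdx (pdt w))
    + cst lam * (pdx (pdx w) * pdx (pdx w)) + cst ρ * (pdt z * pdt z) + thD w z a * thD w z a)
  + (cst μ * pdx (pdt (pdt w)) - cst lam * pdx (pdx (pdx w)) + fD w z a b) * (mX L * pdx w - w)
  - thD w z a * mX L * a * pdx w
abbrev q2D : ℝ → ℝ → ℝ :=
  (cst μ * pdx (pdt (pdt w)) - cst lam * pdx (pdx (pdx w)) + fD w z a b) * pdt w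
  + cst lam * pdx (pdx w) * pdx (pdt w) + thD w z a * pdt z
abbrev rD : ℝ → ℝ → ℝ := thD w z a * pdx w * (a + mX L * pdx a)
  - cst β * (pdt w * pdt w) - b * mX L * pdx w * pdx (pdx w)
abbrev sD : ℝ → ℝ → ℝ := pdt a * thD w z a * pdx w - b * pdx w * pdx (pdt w)
abbrev lD : ℝ → ℝ → ℝ := pdx w * pdx w + w * w
abbrev dD : ℝ → ℝ → ℝ := pdt w * pdt w + pdx w * pdx w + w * w + z * z

variable {β μ lam ρ L w z a b}

theorem id1 [Sm w] [Sm z] [Sm a] [Sm b] {x t : ℝ}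
    (h1 : β * pdt (pdt w) x t - μ * pdx (pdx (pdt (pdt w))) x t
        + lam * pdx (pdx (pdx (pdx w))) x t - pdx (fD w z a b) x t = 0)
    (h2 : ρ * pdt (pdt z) x t - pdx (thD w z a) x t = 0) :
    pdt (pD β μ ρ L w z) x t
      = pdx (q1D β μ lam ρ L w z a b) x t - eD β μ lam ρ w z a x t + rD β L w z a b x t := by
  simp only [pdx_add, pdx_sub, pdx_mul, pdt_add, pdt_sub, pdt_mul, pdx_cst, pdt_cst, pdx_mX,
    pdt_mX, pd_comm, Pi.add_apply, Pi.sub_apply, Pi.mul_apply] at h1 h2 ⊢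
  simp only [cst, mX]
  linear_combination ((x - L) * pdx w x t - w x t) * h1 + ((x - L) * pdx z x t) * h2

theorem id2 [Sm w] [Sm z] [Sm a] [Sm b] {x t : ℝ}
    (h1 : β * pdt (pdt w) x t - μ * pdx (pdx (pdt (pdt w))) x t
        + lam * pdx (pdx (pdx (pdx w))) x t - pdx (fD w z a b) x t = 0)
    (h2 : ρ * pdt (pdt z) x t - pdx (thD w z a) x t = 0) :
    pdt (eD β μ lam ρ w z a) x t
      = pdx (q2D μ lam w z a b) x t + sD w z a b x t := by
  simp only [pdx_add, pdx_sub, pdx_mul, pdt_add, pdt_sub, pdt_mul, pdx_cst, pdt_cst,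
    pd_comm, Pi.add_apply, Pi.sub_apply, Pi.mul_apply] at h1 h2 ⊢
  simp only [cst]
  linear_combination (pdt w x t) * h1 + (pdt z x t) * h2

theorem int_add' {f g : ℝ → ℝ → ℝ} [Sm f] [Sm g] (a b t : ℝ) :
    ∫ x in a..b, (f x t + g x t) = (∫ x in a..b, f x t) + ∫ x in a..b, g x t :=
  intervalIntegral.integral_add ((Sm.contx (f := f) t).intervalIntegrable _ _)
    ((Sm.contx (f := g) t).intervalIntegrable _ _)

theorem int_mono' {f g : ℝ → ℝ → ℝ} [Sm f] [Sm g] {a b t : ℝ} (hab : a ≤ b)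
    (h : ∀ x ∈ Set.Icc a b, f x t ≤ g x t) :
    ∫ x in a..b, f x t ≤ ∫ x in a..b, g x t :=
  intervalIntegral.integral_mono_on hab ((Sm.contx (f := f) t).intervalIntegrable _ _)
    ((Sm.contx (f := g) t).intervalIntegrable _ _) h

theorem int_lin {f g : ℝ → ℝ → ℝ} [Sm f] [Sm g] (a b t c d : ℝ) :
    ∫ x in a..b, (cst c * f + cst d * g) x t
      = c * (∫ x in a..b, f x t) + d * ∫ x in a..b, g x t := by
  have := int_add' (f := cst c * f) (g := cst d * g) a b t
  simp only [Pi.add_apply, Pi.mul_apply, cst, intervalIntegral.integral_const_mul] at this ⊢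
  exact this

theorem int_abs {f g k : ℝ → ℝ → ℝ} [Sm f] [Sm g] [Sm k] {a b t c d : ℝ} (hab : a ≤ b)
    (h : ∀ x ∈ Set.Icc a b, |k x t| ≤ c * f x t + d * g x t) :
    |∫ x in a..b, k x t| ≤ c * (∫ x in a..b, f x t) + d * ∫ x in a..b, g x t := by
  rw [← int_lin, abs_le]
  constructor
  · rw [← intervalIntegral.integral_neg]
    refine intervalIntegral.integral_mono_on hab
      ((Sm.contx (f := cst c * f + cst d * g) t).neg.intervalIntegrable _ _)
      ((Sm.contx (f := k) t).intervalIntegrable _ _) fun x hx => ?_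
    exact (abs_le.1 (h x hx)).1
  · exact int_mono' hab fun x hx => (abs_le.1 (h x hx)).2

theorem core_thm {L₀ T B : ℝ} (hL : L₀ < L)
    (hβ : 0 < β) (hμ : 0 < μ) (hlam : 0 < lam) (hρ : 0 < ρ)
    (hT : 0 < T) (hB : 0 < B)
    (hTbig : T > 10 * (L - L₀) * Real.sqrt (μ / lam + ρ)) :
    ∃ C > (0:ℝ), ∀ w z a b : ℝ → ℝ → ℝ, Sm w → Sm z → Sm a → Sm b →
      (∀ x ∈ Set.Icc L₀ L, ∀ t ∈ Set.Icc (0:ℝ) T,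
        |a x t| ≤ B ∧ |pdx a x t| ≤ B ∧ |pdt a x t| ≤ B ∧ |b x t| ≤ B) →
      (∀ x ∈ Set.Icc L₀ L, ∀ t ∈ Set.Icc (0:ℝ) T,
        β * pdt (pdt w) x t - μ * pdx (pdx (pdt (pdt w))) x t
        + lam * pdx (pdx (pdx (pdx w))) x t - pdx (fD w z a b) x t = 0 ∧
        ρ * pdt (pdt z) x t - pdx (thD w z a) x t = 0) →
      (∀ t ∈ Set.Icc (0:ℝ) T,
        w L₀ t = 0 ∧ pdx w L₀ t = 0 ∧ pdx (pdx w) L₀ t = 0 ∧ pdx (pdx (pdx w)) L₀ t = 0 ∧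
        z L₀ t = 0 ∧ pdx z L₀ t = 0 ∧ w L t = 0 ∧ pdx (pdx w) L t = 0 ∧ z L t = 0) →
      (∫ x in L₀..L, eD β μ lam ρ w z a x T) + (∫ x in L₀..L, eD β μ lam ρ w z a x 0) ≤
        C * ∫ t in (0:ℝ)..T, ∫ x in L₀..L, dD w z x t := by
  obtain ⟨l, hl⟩ : ∃ l, l = L - L₀ := ⟨_, rfl⟩
  have hl0 : 0 < l := by rw [hl]; linarith
  obtain ⟨k, hk⟩ : ∃ k, k = Real.sqrt (μ / lam + ρ) := ⟨_, rfl⟩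
  have hk0 : 0 ≤ k := by rw [hk]; positivity
  rw [← hl, ← hk] at hTbig
  obtain ⟨C₁, hC₁, hp⟩ := pbound hβ hμ hlam hρ hB hl0 hk
  obtain ⟨ε, hε⟩ : ∃ ε, ε = 1 / (8 * (1 + 2 * C₁ + T)) := ⟨_, rfl⟩
  have hε0 : 0 < ε := by rw [hε]; positivity
  obtain ⟨C₂, hC₂, hab⟩ := absorb hβ hμ hlam hρ hB hl0 hε0
  have hK : 0 ≤ l * k := by positivity
  have hTK : 10 * (l * k) < T := by linarith
  have hpos : 0 < T - 9 * (l * k) := by linarith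
  refine ⟨_, (by positivity : 0 < ((9 / 4 * (2 * (C₁ * (2 / T + 2 * C₂) + C₂)) + 2 * T * C₂)
    / (T - 9 * (l * k)))), ?_⟩
  intro w z a b sw sz sa sb hbd hpde hbc
  have wtL₀ := pdt_zero (f := w) hT (x := L₀) fun t ht => (hbc t ht).1
  have wtL := pdt_zero (f := w) hT (x := L) fun t ht => (hbc t ht).2.2.2.2.2.2.1
  have ztL₀ := pdt_zero (f := z) hT (x := L₀) fun t ht => (hbc t ht).2.2.2.2.1
  have ztL := pdt_zero (f := z) hT (x := L) fun t ht => (hbc t ht).2.2.2.2.2.2.2.2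
  have wtxL₀ := pdt_zero (f := pdx w) hT (x := L₀) fun t ht => (hbc t ht).2.1
  rw [pd_comm] at wtxL₀
  have hm : ∀ x ∈ Set.Icc L₀ L, |x - L| ≤ l := by
    intro x hx; rw [abs_le, hl]; constructor <;> linarith [hx.1, hx.2]
  have eDval : ∀ x t, eD β μ lam ρ w z a x t = 1 / 2 * (β * pdt w x t ^ 2
      + μ * pdx (pdt w) x t ^ 2 + lam * pdx (pdx w) x t ^ 2
        + (thD w z a x t) ^ 2 + ρ * pdt z x t ^ 2) := by
    intro x t
    simp only [Pi.add_apply, Pi.mul_apply, cst]; ring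
  have dDval : ∀ x t, dD w z x t = pdt w x t ^ 2 + pdx w x t ^ 2 + w x t ^ 2 + z x t ^ 2 := by
    intro x t
    simp only [Pi.add_apply, Pi.mul_apply]; ring
  refine ode_lemma (K := l * k) (E := fun t => ∫ x in L₀..L, eD β μ lam ρ w z a x t)
    (P := fun t => ∫ x in L₀..L, pD β μ ρ L w z x t)
    (e := fun t => ∫ x in L₀..L, lD w x t) (d := fun t => ∫ x in L₀..L, dD w z x t)
    hT hK hTK hC₁.le hC₂ hε
    (fun t => hasDeriv_int _ _ t) (fun t => hasDeriv_int _ _ t) (fun t => hasDeriv_int _ _ t)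
    (Sm.contInt _ _) (Sm.contInt _ _) (Sm.contInt _ _) (Sm.contInt _ _) ?_ ?_ ?_ ?_ ?_ ?_ ?_
  · intro t ht
    refine intervalIntegral.integral_nonneg hL.le fun x hx => ?_
    rw [eDval]; positivity
  · intro t ht
    refine intervalIntegral.integral_nonneg hL.le fun x hx => ?_
    rw [dDval]; positivity
  · intro t ht
    refine int_mono' hL.le fun x hx => ?_
    rw [dDval]
    simp only [Pi.add_apply, Pi.mul_apply]
    nlinarith [sq_nonneg (pdt w x t), sq_nonneg (z x t)]
  · intro t ht
    have e1 : ∫ x in L₀..L, pdt (eD β μ lam ρ w z a) x t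
        = ∫ x in L₀..L, (pdx (q2D μ lam w z a b) x t + sD w z a b x t) := by
      refine intervalIntegral.integral_congr fun x hx => ?_
      rw [Set.uIcc_of_le hL.le] at hx
      exact id2 (hpde x hx t ht).1 (hpde x hx t ht).2
    obtain ⟨b1, b2, b3, b4, b5, b6, b7, b8, b9⟩ := hbc t ht
    have e2 : q2D μ lam w z a b L t - q2D μ lam w z a b L₀ t = 0 := by
      simp only [Pi.add_apply, Pi.sub_apply, Pi.mul_apply, wtL t ht, wtL₀ t ht, ztL t ht,
        ztL₀ t ht, b3, b8]
      ring
    rw [e1, int_add', int_pdx, e2, zero_add]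
    refine int_abs hL.le fun x hx => ?_
    obtain ⟨c1, c2, c3, c4⟩ := hbd x hx t ht
    have := (hab (pdt w x t) (pdx w x t) (w x t) (z x t) (pdx (pdt w) x t) (pdx (pdx w) x t)
      (thD w z a x t) (pdt z x t) _ _ _ _ _ c1 c2 c3 c4 (hm x hx)).1
    rw [eDval, dDval]
    refine le_trans (le_of_eq ?_) this
    congr 1
    simp only [Pi.add_apply, Pi.sub_apply, Pi.mul_apply]
    ring
  · intro t ht
    have e1 : ∫ x in L₀..L, pdt (pD β μ ρ L w z) x t
        = ∫ x in L₀..L, (pdx (q1D β μ lam ρ L w z a b) x t +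
          (rD β L w z a b - eD β μ lam ρ w z a) x t) := by
      refine intervalIntegral.integral_congr fun x hx => ?_
      rw [Set.uIcc_of_le hL.le] at hx
      refine (id1 (hpde x hx t ht).1 (hpde x hx t ht).2).trans ?_
      rw [Pi.sub_apply, Pi.sub_apply]
      ring
    obtain ⟨b1, b2, b3, b4, b5, b6, b7, b8, b9⟩ := hbc t ht
    have e2 : q1D β μ lam ρ L w z a b L t - q1D β μ lam ρ L w z a b L₀ t = 0 := by
      simp only [Pi.add_apply, Pi.sub_apply, Pi.mul_apply, wtL t ht, wtL₀ t ht, ztL t ht,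
        ztL₀ t ht, wtxL₀ t ht, b1, b2, b3, b6, b7, mX]
      ring
    change (∫ x in L₀..L, pdt (pD β μ ρ L w z) x t) + (∫ x in L₀..L, eD β μ lam ρ w z a x t) ≤ _
    rw [e1, int_add', int_pdx, e2, zero_add, ← int_add', ← int_lin]
    have i1 : Sm (rD β L w z a b) := inferInstance
    have i2 : Sm (eD β μ lam ρ w z a) := inferInstance
    have i3 : Sm (rD β L w z a b - eD β μ lam ρ w z a) := Sm.sub
    have i4 : Sm (rD β L w z a b - eD β μ lam ρ w z a + eD β μ lam ρ w z a) := Sm.add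
    refine intervalIntegral.integral_mono_on hL.le
      ((Sm.contx (f := rD β L w z a b - eD β μ lam ρ w z a + eD β μ lam ρ w z a)
        t).intervalIntegrable _ _)
      ((Sm.contx (f := cst ε * eD β μ lam ρ w z a + cst C₂ * dD w z) t).intervalIntegrable _ _)
      fun x hx => ?_
    obtain ⟨c1, c2, c3, c4⟩ := hbd x hx t ht
    have := (hab (pdt w x t) (pdx w x t) (w x t) (z x t) (pdx (pdt w) x t) (pdx (pdx w) x t)
      (thD w z a x t) (pdt z x t) _ _ _ _ _ c1 c2 c3 c4 (hm x hx)).2.1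
    rw [← eDval, ← dDval] at this
    refine le_trans (le_of_eq ?_) this
    simp only [Pi.add_apply, Pi.sub_apply, Pi.mul_apply, cst, mX]
    ring
  · intro t ht
    refine int_abs hL.le fun x hx => ?_
    obtain ⟨c1, c2, c3, c4⟩ := hbd x hx t ht
    have := (hab (pdt w x t) (pdx w x t) (w x t) (z x t) (pdx (pdt w) x t) (pdx (pdx w) x t)
      (thD w z a x t) (pdt z x t) _ _ _ _ _ c1 c2 c3 c4 (hm x hx)).2.2
    rw [eDval, dDval]
    refine le_trans (le_of_eq ?_) this
    congr 1
    simp only [pdt_add, pdt_mul, pd_comm, Pi.add_apply, Pi.mul_apply]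
    ring
  · intro t ht
    refine int_abs hL.le fun x hx => ?_
    obtain ⟨c1, c2, c3, c4⟩ := hbd x hx t ht
    have := hp (pdt w x t) (pdx w x t) (w x t) (pdx (pdt w) x t) (pdx (pdx w) x t)
      (thD w z a x t) (pdt z x t) (pdx z x t) _ _ c1 (hm x hx) rfl
    rw [eDval]
    refine le_trans (le_of_eq ?_) (this.trans (le_of_eq ?_))
    · rfl
    · simp only [Pi.add_apply, Pi.mul_apply]
      ring

end core

/-- Observability inequality (estimate (91) of the paper) for the time difference of
an `M`-bounded solution of the elastic von Karman beam system under the overdetermined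
boundary conditions, provided `T > 10(L − L₀)(μ₂/λ₂ + ρ₂)^{1/2}`. -/
theorem stmt_16 (L₀ L β₂ μ₂ lam₂ ρ₂ T h M : ℝ)
    (hL₀ : 0 < L₀) (hL : L₀ < L)
    (hβ₂ : 0 < β₂) (hμ₂ : 0 < μ₂) (hlam₂ : 0 < lam₂) (hρ₂ : 0 < ρ₂)
    (hT : 0 < T) (hh : 0 < h) (hM : 0 < M)
    (hTbig : T > 10 * (L - L₀) * Real.sqrt (μ₂ / lam₂ + ρ₂)) :
    ∃ C > (0:ℝ), ∀ u v : ℝ → ℝ → ℝ,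
      (∀ n : ℕ, ContDiff ℝ n (Function.uncurry u)) →
      (∀ n : ℕ, ContDiff ℝ n (Function.uncurry v)) →
      VKBeam β₂ μ₂ lam₂ ρ₂ L₀ L (T + h) u v →
      MBounded M L₀ L (T + h) u → MBounded M L₀ L (T + h) v →
      (∀ t ∈ Set.Icc (0:ℝ) T,
        tdiff h u L₀ t = 0 ∧ pdx (tdiff h u) L₀ t = 0 ∧
        pdx (pdx (tdiff h u)) L₀ t = 0 ∧ pdx (pdx (pdx (tdiff h u))) L₀ t = 0 ∧
        tdiff h v L₀ t = 0 ∧ pdx (tdiff h v) L₀ t = 0 ∧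
        tdiff h u L t = 0 ∧ pdx (pdx (tdiff h u)) L t = 0 ∧ tdiff h v L t = 0) →
      Ed β₂ μ₂ lam₂ ρ₂ L₀ L h u v T + Ed β₂ μ₂ lam₂ ρ₂ L₀ L h u v 0 ≤
        C * (∫ t in (0:ℝ)..T, (∫ x in L₀..L,
          ((pdt (tdiff h u) x t) ^ 2 + (pdx (tdiff h u) x t) ^ 2
            + (tdiff h u x t) ^ 2 + (tdiff h v x t) ^ 2))) := by
  have hB : 0 < M + M ^ 2 / 2 := by positivity
  obtain ⟨C, hC, H⟩ := core_thm hL hβ₂ hμ₂ hlam₂ hρ₂ hT hB hTbig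
  refine ⟨C, hC, ?_⟩
  intro u v hu hv hpde hMu hMv hbc
  have su : Sm u := ⟨contDiff_infty.2 hu⟩
  have sv : Sm v := ⟨contDiff_infty.2 hv⟩
  have sw : Sm (tdiff h u) := by rw [tdiff_eq]; infer_instance
  have sz : Sm (tdiff h v) := by rw [tdiff_eq]; infer_instance
  obtain ⟨N, hN⟩ : ∃ N, N = pdx v + cst (1 / 2) * (pdx u * pdx u) := ⟨_, rfl⟩
  have sN : Sm N := by rw [hN]; infer_instance
  obtain ⟨a, ha⟩ : ∃ a, a = cst (1 / 2) * (shf h (pdx u) + pdx u) := ⟨_, rfl⟩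
  obtain ⟨b, hb⟩ : ∃ b, b = cst (1 / 2) * (shf h N + N) := ⟨_, rfl⟩
  have sa : Sm a := by rw [ha]; infer_instance
  have sb : Sm b := by rw [hb]; infer_instance
  have wx : pdx (tdiff h u) = shf h (pdx u) - pdx u := by rw [tdiff_eq, pdx_sub, pdx_shf]
  have zx : pdx (tdiff h v) = shf h (pdx v) - pdx v := by rw [tdiff_eq, pdx_sub, pdx_shf]
  have hth : thD (tdiff h u) (tdiff h v) a = shf h N - N := by
    funext x t
    simp only [wx, zx, ha, hN, Pi.add_apply, Pi.sub_apply, Pi.mul_apply, shf, cst]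
    ring
  have hf : fD (tdiff h u) (tdiff h v) a b = shf h (pdx u * N) - pdx u * N := by
    funext x t
    unfold fD
    rw [hth]
    simp only [wx, ha, hb, Pi.add_apply, Pi.sub_apply, Pi.mul_apply, shf, cst]
    ring
  have e1 : (fun y s => pdx u y s * (pdx v y s + (pdx u y s) ^ 2 / 2)) = pdx u * N := by
    funext x t
    simp only [hN, Pi.add_apply, Pi.mul_apply, cst]; ring
  have e2 : (fun y s => pdx v y s + (pdx u y s) ^ 2 / 2) = N := by
    funext x t
    simp only [hN, Pi.add_apply, Pi.mul_apply, cst]; ring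
  have hsh : ∀ t ∈ Set.Icc (0:ℝ) T, t ∈ Set.Icc 0 (T + h) ∧ t + h ∈ Set.Icc 0 (T + h) := by
    intro t ht
    exact ⟨⟨ht.1, by linarith [ht.2]⟩, ⟨by linarith [ht.1], by linarith [ht.2]⟩⟩
  have key := H (tdiff h u) (tdiff h v) a b sw sz sa sb ?_ ?_ hbc
  · have hE : ∀ t, Ed β₂ μ₂ lam₂ ρ₂ L₀ L h u v t
        = ∫ x in L₀..L, eD β₂ μ₂ lam₂ ρ₂ (tdiff h u) (tdiff h v) a x t := by
      intro t
      have A1 : IntervalIntegrable (fun x => β₂ * (pdt (tdiff h u) x t) ^ 2) volume L₀ L :=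
        (((Sm.contx (f := pdt (tdiff h u)) t).pow 2).const_mul β₂).intervalIntegrable _ _
      have A2 : IntervalIntegrable (fun x => μ₂ * (pdx (pdt (tdiff h u)) x t) ^ 2) volume L₀ L :=
        (((Sm.contx (f := pdx (pdt (tdiff h u))) t).pow 2).const_mul μ₂).intervalIntegrable _ _
      have A3 : IntervalIntegrable (fun x => lam₂ * (pdx (pdx (tdiff h u)) x t) ^ 2) volume L₀ L :=
        (((Sm.contx (f := pdx (pdx (tdiff h u))) t).pow 2).const_mul lam₂).intervalIntegrable _ _
      have A4 : IntervalIntegrable (fun x => (thD (tdiff h u) (tdiff h v) a x t) ^ 2)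
          volume L₀ L :=
        ((Sm.contx (f := thD (tdiff h u) (tdiff h v) a) t).pow 2).intervalIntegrable _ _
      have A5 : IntervalIntegrable (fun x => ρ₂ * (pdt (tdiff h v) x t) ^ 2) volume L₀ L :=
        (((Sm.contx (f := pdt (tdiff h v)) t).pow 2).const_mul ρ₂).intervalIntegrable _ _
      have e3 : ∀ x, pdx (tdiff h v) x t
          + (1 / 2) * pdx (tdiff h u) x t * (pdx u x (t + h) + pdx u x t)
          = thD (tdiff h u) (tdiff h v) a x t := by
        intro x
        simp only [ha, Pi.add_apply, Pi.mul_apply, shf, cst]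
        ring
      unfold Ed
      simp only [e3]
      rw [← intervalIntegral.integral_const_mul, ← intervalIntegral.integral_const_mul,
        ← intervalIntegral.integral_const_mul, ← intervalIntegral.integral_const_mul,
        ← intervalIntegral.integral_add A1 A2,
        ← intervalIntegral.integral_add (A1.add A2) A3,
        ← intervalIntegral.integral_add ((A1.add A2).add A3) A4,
        ← intervalIntegral.integral_add (((A1.add A2).add A3).add A4) A5,
        ← intervalIntegral.integral_const_mul]
      refine intervalIntegral.integral_congr fun x _ => ?_
      simp only [Pi.add_apply, Pi.mul_apply, cst]
      ring
    rw [hE, hE]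
    refine key.trans (le_of_eq ?_)
    congr 1
    refine intervalIntegral.integral_congr fun t _ => ?_
    refine intervalIntegral.integral_congr fun x _ => ?_
    simp only [Pi.add_apply, Pi.mul_apply]
    ring
  · intro x hx t ht
    obtain ⟨h1, h2⟩ := hsh t ht
    have M2 : 0 ≤ M ^ 2 := sq_nonneg M
    have half : ∀ p q c : ℝ, |p| ≤ c → |q| ≤ c → |1 / 2 * (p + q)| ≤ c := by
      intro p q c hp hq
      rw [abs_le] at *
      constructor <;> linarith [hp.1, hp.2, hq.1, hq.2]
    have hNb : ∀ s ∈ Set.Icc 0 (T + h), |N x s| ≤ M + M ^ 2 / 2 := by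
      intro s hs
      have k1 := abs_le.1 (bd1 hMv hx hs)
      have k2 : pdx u x s ^ 2 ≤ M ^ 2 := sq_le_sq.2 ((bd1 hMu hx hs).trans (le_abs_self M))
      simp only [hN, Pi.add_apply, Pi.mul_apply, cst]
      rw [abs_le]
      constructor <;> nlinarith [sq_nonneg (pdx u x s)]
    refine ⟨?_, ?_, ?_, ?_⟩
    · rw [ha]
      exact (half _ _ M (bd1 hMu hx h2) (bd1 hMu hx h1)).trans (by linarith)
    · have : pdx a x t = 1 / 2 * (pdx (pdx u) x (t + h) + pdx (pdx u) x t) := by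
        simp only [ha, pdx_mul, pdx_add, pdx_cst, pdx_shf, Pi.add_apply, Pi.mul_apply, cst, shf]
        ring
      rw [this]
      exact (half _ _ M (bd2 hMu hx h2).1 (bd2 hMu hx h1).1).trans (by linarith)
    · have : pdt a x t = 1 / 2 * (pdt (pdx u) x (t + h) + pdt (pdx u) x t) := by
        simp only [ha, pdt_mul, pdt_add, pdt_cst, pdt_shf, Pi.add_apply, Pi.mul_apply, cst, shf]
        ring
      rw [this]
      exact (half _ _ M (bd2 hMu hx h2).2 (bd2 hMu hx h1).2).trans (by linarith)
    · rw [hb]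
      exact half _ _ _ (hNb _ h2) (hNb _ h1)
  · intro x hx t ht
    obtain ⟨h1, h2⟩ := hsh t ht
    obtain ⟨p1, p2⟩ := hpde x hx t h1
    obtain ⟨r1, r2⟩ := hpde x hx (t + h) h2
    rw [e1] at p1 r1
    rw [e2] at p2 r2
    rw [hf, hth]
    simp only [tdiff_eq, pdt_sub, pdx_sub, pdt_shf, pdx_shf, Pi.sub_apply]
    simp only [shf]
    constructor
    · linear_combination r1 - p1
    · linear_combination r2 - p2
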